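/- Relative Oscillation Theorem, open case: Let λ_0, λ_1 ∈ ℝ and for j = 0,1 let u_{j,−}(λ_j) be a solution of τ_j u = λ_j u with u_{j,−}(λ_j, 0) = 0 and u_{j,+}(λ_j) a solution of τ_j u = λ_j u with u_{j,+}(λ_j, N) = 0. Then E_{(−∞,λ_1)}(J_1) − E_{(−∞,λ_0)}(J_0) = #_{[0,N]}(u_{0,+}(λ_0), u_{1,−}(λ_1)) = #_{(0,N)}(u_{0,−}(λ_0), u_{1,+}(λ_1)). -/

import Mathlib

/-!
Let `θⱼ` be Prüfer angles of the two solutions, so that `Wₙ(u₀, u₁)` has the sign of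
`sin (θ₁ - θ₀)`. The weighted sign `#ₙ` is the increment of `⌈(θ₁ - θ₀)/π⌉` from `n` to `n + 1`,
while the node indicator of `uⱼ` is the increment of `⌈θⱼ/π⌉`. Hence, up to a telescoping
correction `angleInd ∈ {0, 1}`, the sum of the `#ₙ` is the difference of the numbers of nodes of
`u₁` and `u₀` (`jSgn_step`, `cntCC_eq`). The angles never appear in the formal proof: everything is
expressed through signs.

It remains to identify node counts with eigenvalue counts (Sturm oscillation, `nodeSum_eq`). For
equal coefficients and `z₀ < z₁`, the Wronskian increment `(z₁ - z₀) u₀ u₁` shows that all `#ₙ` are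
nonnegative and that one is positive. By the identity above, the node count of the solution
vanishing at `0` is therefore nondecreasing in the spectral parameter and strictly larger to the
right of each eigenvalue. It takes at most `N` values, and there are `N - 1` eigenvalues because
the spectrum is simple, so it must count the eigenvalues to the left. Solutions vanishing at `N`
are reduced to this case by the identity applied to two solutions of the same equation, whose
Wronskian is constant (`nodeSum_eq_right`).
-/

open Real

noncomputable section

/-- The Jacobi difference expression `(τ u)(n) = a(n)u(n+1) + a(n-1)u(n-1) + b(n)u(n)`. -/
def jTau (a b : ℤ → ℝ) (u : ℤ → ℝ) (n : ℤ) : ℝ :=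
  a n * u (n + 1) + a (n - 1) * u (n - 1) + b n * u n

/-- `u` is a solution of `τ u = z u`: not identically zero and satisfying the recursion. -/
def IsJSolution (a b : ℤ → ℝ) (z : ℝ) (u : ℤ → ℝ) : Prop :=
  u ≠ 0 ∧ ∀ n : ℤ, jTau a b u n = z * u n

/-- The (N-1)×(N-1) Jacobi matrix with diagonal b(1),…,b(N-1) and
off-diagonal a(1),…,a(N-2). -/
def jMatrix (N : ℕ) (a b : ℤ → ℝ) : Matrix (Fin (N - 1)) (Fin (N - 1)) ℝ :=
  fun i j =>
    if (i : ℕ) = (j : ℕ) then b (((i : ℕ) : ℤ) + 1)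
    else if (i : ℕ) + 1 = (j : ℕ) then a (((i : ℕ) : ℤ) + 1)
    else if (j : ℕ) + 1 = (i : ℕ) then a (((j : ℕ) : ℤ) + 1)
    else 0

/-- `μ` is an eigenvalue of the matrix `J`. -/
def IsEV {m : ℕ} (J : Matrix (Fin m) (Fin m) ℝ) (μ : ℝ) : Prop :=
  ∃ v : Fin m → ℝ, v ≠ 0 ∧ J.mulVec v = μ • v

/-- The number of eigenvalues of `J` in `Ω`. -/
def evCount {m : ℕ} (J : Matrix (Fin m) (Fin m) ℝ) (Ω : Set ℝ) : ℕ :=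
  {μ ∈ Ω | IsEV J μ}.ncard

/-- The (modified) Wronskian `W_n(u₀,u₁) = u₀(n)a₁(n)u₁(n+1) - u₁(n)a₀(n)u₀(n+1)`. -/
def jW (a0 a1 : ℤ → ℝ) (u0 u1 : ℤ → ℝ) (n : ℤ) : ℝ :=
  u0 n * a1 n * u1 (n + 1) - u1 n * a0 n * u0 (n + 1)

open Classical in
/-- The weighted node sign `#_n(u₀,u₁) ∈ {-1,0,1}` of the Wronskian at `n`. -/
def jSgn (a0 a1 u0 u1 : ℤ → ℝ) (n : ℤ) : ℤ :=
  if jW a0 a1 u0 u1 (n + 1) * u0 (n + 1) * u1 (n + 1) > 0 ∧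
      (jW a0 a1 u0 u1 n * jW a0 a1 u0 u1 (n + 1) < 0 ∨
        (jW a0 a1 u0 u1 n = 0 ∧ jW a0 a1 u0 u1 (n + 1) ≠ 0)) then 1
  else if jW a0 a1 u0 u1 n * u0 (n + 1) * u1 (n + 1) > 0 ∧
      (jW a0 a1 u0 u1 n * jW a0 a1 u0 u1 (n + 1) < 0 ∨
        (jW a0 a1 u0 u1 n ≠ 0 ∧ jW a0 a1 u0 u1 (n + 1) = 0)) then -1
  else 0

/-- `#_{[m,n]}(u₀,u₁) = Σ_{j=m}^{n-1} #_j(u₀,u₁)`. -/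
def cntCC (a0 a1 u0 u1 : ℤ → ℝ) (m n : ℤ) : ℤ :=
  ∑ j ∈ Finset.Ico m n, jSgn a0 a1 u0 u1 j

open Classical in
/-- `#_{(m,n]}(u₀,u₁)`. -/
def cntOC (a0 a1 u0 u1 : ℤ → ℝ) (m n : ℤ) : ℤ :=
  cntCC a0 a1 u0 u1 m n - if jW a0 a1 u0 u1 m = 0 then 1 else 0

open Classical in
/-- `#_{[m,n)}(u₀,u₁)`. -/
def cntCO (a0 a1 u0 u1 : ℤ → ℝ) (m n : ℤ) : ℤ :=
  cntCC a0 a1 u0 u1 m n + if jW a0 a1 u0 u1 n = 0 then 1 else 0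

open Classical in
/-- `#_{(m,n)}(u₀,u₁)`. -/
def cntOO (a0 a1 u0 u1 : ℤ → ℝ) (m n : ℤ) : ℤ :=
  cntCC a0 a1 u0 u1 m n - (if jW a0 a1 u0 u1 m = 0 then 1 else 0)
    + (if jW a0 a1 u0 u1 n = 0 then 1 else 0)

/-- `n` is a node of `u`: `u(n) = 0` or `a(n)u(n)u(n+1) > 0`. -/
def IsNode (a u : ℤ → ℝ) (n : ℤ) : Prop :=
  u n = 0 ∨ a n * u n * u (n + 1) > 0

open Classical in
/-- The number of nodes of `u` between `m` and `l`: nodes `n` with `m < n < l`,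
plus one if `m` is a node with `u(m) ≠ 0`. -/
def nodeCount (a u : ℤ → ℝ) (m l : ℤ) : ℕ :=
  ((Finset.Ioo m l).filter (fun n => IsNode a u n)).card +
    if IsNode a u m ∧ u m ≠ 0 then 1 else 0

/-- `ρ, θ` are Prüfer variables for `u` (w.r.t. the coefficient `a`). -/
def IsPrufer (a u ρ θ : ℤ → ℝ) : Prop :=
  ∀ n : ℤ, 0 < ρ n ∧ u n = ρ n * Real.sin (θ n) ∧
    -(a n) * u (n + 1) = ρ n * Real.cos (θ n) ∧
    ⌈θ n / π⌉ ≤ ⌈θ (n + 1) / π⌉ ∧ ⌈θ (n + 1) / π⌉ ≤ ⌈θ n / π⌉ + 1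
/-! ### Half-line solutions and indicators -/

/-- The half-line form of `IsJSolution`: `u` solves `τ u = z u` at `1, 2, 3, …` and no two
consecutive values of `u` on `{0, 1, 2, …}` vanish. -/
def HalfSol (a b : ℤ → ℝ) (z : ℝ) (u : ℤ → ℝ) : Prop :=
  (∀ n : ℤ, 0 ≤ n → ¬ (u n = 0 ∧ u (n + 1) = 0)) ∧
  ∀ n : ℤ, 0 ≤ n →
    a (n + 1) * u (n + 1 + 1) + a n * u n + b (n + 1) * u (n + 1) = z * u (n + 1)

open Classical in
/-- Indicator of `n` being a node of `u` (when `a < 0`), i.e. the increment of `⌈θ/π⌉` from `n`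
to `n + 1` for a Prüfer angle `θ` of `u`. -/
def nodeInd (u : ℤ → ℝ) (n : ℤ) : ℤ := if u n = 0 ∨ u n * u (n + 1) < 0 then 1 else 0

open Classical in
/-- With `αⱼ ∈ (0, π]` the Prüfer angle of `uⱼ` at `n` reduced modulo `π`, this is the indicator
of `α₁ > α₀`. It equals `⌈(θ₁ - θ₀)/π⌉ - (⌈θ₁/π⌉ - ⌈θ₀/π⌉)`. -/
def angleInd (a0 a1 u0 u1 : ℤ → ℝ) (n : ℤ) : ℤ :=
  if u0 n = 0 then 0 else if u1 n = 0 then 1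
  else if 0 < jW a0 a1 u0 u1 n * (u0 n * u1 n) then 1 else 0

/-- The number of nodes of `u` in `{0, …, N - 1}`. -/
def nodeSum (N : ℕ) (u : ℤ → ℝ) : ℤ := ∑ n ∈ Finset.Ico (0 : ℤ) N, nodeInd u n

lemma sum_Ico_int (N : ℕ) (f : ℤ → ℤ) :
    ∑ n ∈ Finset.Ico (0 : ℤ) N, f n = ∑ n ∈ Finset.range N, f (n : ℤ) := by
  induction N with
  | zero => simp
  | succ k ih =>
    have : Finset.Ico (0 : ℤ) ((k + 1 : ℕ) : ℤ) = insert (k : ℤ) (Finset.Ico (0 : ℤ) k) := by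
      ext x; simp only [Finset.mem_Ico, Finset.mem_insert]; omega
    rw [this, Finset.sum_insert (by simp), Finset.sum_range_succ, ih, add_comm]

lemma HalfSol.of_solution {a b : ℤ → ℝ} {z : ℝ} {u : ℤ → ℝ} (ha : ∀ n, a n < 0)
    (h : IsJSolution a b z u) : HalfSol a b z u := by
  obtain ⟨hne, hrec⟩ := h
  constructor
  · rintro n - ⟨h0, h1⟩
    apply hne
    have key : ∀ k : ℤ, u (n + k) = 0 ∧ u (n + k + 1) = 0 := by
      intro k
      induction k using Int.induction_on with
      | zero => simpa using ⟨h0, h1⟩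
      | succ i ih =>
        have e := hrec (n + i + 1)
        simp only [jTau, add_sub_cancel_right, ih.1, ih.2, mul_zero, add_zero] at e
        rcases mul_eq_zero.1 e with e | e
        · exact absurd e (ha _).ne
        · rw [← add_assoc]; exact ⟨ih.2, e⟩
      | pred i ih =>
        have e := hrec (n + -i)
        simp only [jTau, ih.1, ih.2, mul_zero, add_zero, zero_add] at e
        rcases mul_eq_zero.1 e with e | e
        · exact absurd e (ha _).ne
        · have e1 : n + (-(i : ℤ) - 1) = n + -i - 1 := by ring
          rw [e1, sub_add_cancel]; exact ⟨e, ih.1⟩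
    funext m
    have := (key (m - n)).1
    simpa using this
  · intro n _
    have e := hrec (n + 1)
    simpa only [jTau, add_sub_cancel_right] using e

/-! ### The local identity and its sum -/

/-- Away from zeros of `u₀, u₁` at `n + 1`, the sign `#ₙ` records whether
`W · u₀(n+1) u₁(n+1)` becomes or ceases to be positive. -/
lemma jSgn_eq (a0 a1 u0 u1 : ℤ → ℝ) (n : ℤ) (h0 : u0 (n + 1) ≠ 0) (h1 : u1 (n + 1) ≠ 0) :
    jSgn a0 a1 u0 u1 n =
      (if 0 < jW a0 a1 u0 u1 (n + 1) * (u0 (n + 1) * u1 (n + 1)) then 1 else 0) -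
      (if 0 < jW a0 a1 u0 u1 n * (u0 (n + 1) * u1 (n + 1)) then 1 else 0) := by
  unfold jSgn
  generalize jW a0 a1 u0 u1 (n + 1) = R
  generalize jW a0 a1 u0 u1 n = Q
  rw [mul_assoc, mul_assoc]
  have hP : u0 (n + 1) * u1 (n + 1) ≠ 0 := mul_ne_zero h0 h1
  generalize u0 (n + 1) * u1 (n + 1) = P at *
  rcases lt_trichotomy Q 0 with hQ | hQ | hQ <;> rcases lt_trichotomy R 0 with hR | hR | hR <;>
    rcases lt_or_gt_of_ne hP with hP | hP <;>
    simp [hQ, hR, hP, mul_pos_iff, mul_neg_iff, hQ.not_gt, hR.not_gt, hP.not_gt, ne_of_lt,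
      ne_of_gt]

lemma jSgn_zero (a0 a1 u0 u1 : ℤ → ℝ) (n : ℤ) (h : u0 (n + 1) = 0 ∨ u1 (n + 1) = 0) :
    jSgn a0 a1 u0 u1 n = 0 := by
  unfold jSgn
  rcases h with h | h <;> simp [h]

/-- The local identity: the jump of `⌈(θ₁ - θ₀)/π⌉` equals the difference of the jumps of
`⌈θ₁/π⌉` and `⌈θ₀/π⌉` up to the telescoping correction `angleInd`. -/
lemma jSgn_step (a0 a1 u0 u1 : ℤ → ℝ) (n : ℤ) (ha0 : a0 n < 0) (ha1 : a1 n < 0)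
    (h0 : ¬ (u0 n = 0 ∧ u0 (n + 1) = 0)) (h1 : ¬ (u1 n = 0 ∧ u1 (n + 1) = 0)) :
    jSgn a0 a1 u0 u1 n = nodeInd u1 n - nodeInd u0 n
      + (angleInd a0 a1 u0 u1 (n + 1) - angleInd a0 a1 u0 u1 n) := by
  by_cases hy0 : u0 (n + 1) = 0
  · rw [jSgn_zero _ _ _ _ _ (Or.inl hy0)]
    have hx0 : u0 n ≠ 0 := fun h => h0 ⟨h, hy0⟩
    have e : 0 < jW a0 a1 u0 u1 n * (u0 n * u1 n) ↔ u1 n * u1 (n + 1) < 0 := by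
      have : jW a0 a1 u0 u1 n * (u0 n * u1 n)
          = (a1 n * u0 n ^ 2) * (u1 n * u1 (n + 1)) := by
        unfold jW; rw [hy0]; ring
      rw [this]
      have hA : a1 n * u0 n ^ 2 < 0 := mul_neg_of_neg_of_pos ha1 (by positivity)
      simp [mul_pos_iff, hA, hA.not_gt]
    by_cases hx1 : u1 n = 0 <;> simp [nodeInd, angleInd, hy0, hx0, hx1, e]
  by_cases hy1 : u1 (n + 1) = 0
  · rw [jSgn_zero _ _ _ _ _ (Or.inr hy1)]
    have hx1 : u1 n ≠ 0 := fun h => h1 ⟨h, hy1⟩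
    have e : 0 < jW a0 a1 u0 u1 n * (u0 n * u1 n) ↔ 0 < u0 n * u0 (n + 1) := by
      have : jW a0 a1 u0 u1 n * (u0 n * u1 n)
          = (- a0 n * u1 n ^ 2) * (u0 n * u0 (n + 1)) := by
        unfold jW; rw [hy1]; ring
      rw [this]
      have hA : 0 < - a0 n * u1 n ^ 2 := mul_pos (neg_pos.2 ha0) (by positivity)
      exact mul_pos_iff_of_pos_left hA
    by_cases hx0 : u0 n = 0
    · simp [nodeInd, angleInd, hy0, hx0, hx1, hy1]
    · have hp : u0 n * u0 (n + 1) ≠ 0 := mul_ne_zero hx0 hy0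
      rcases lt_or_gt_of_ne hp with hp | hp <;>
        simp [nodeInd, angleInd, hy0, hx0, hx1, hy1, e, hp, hp.not_gt]
  rw [jSgn_eq _ _ _ _ _ hy0 hy1]
  have hc : angleInd a0 a1 u0 u1 (n + 1)
      = if 0 < jW a0 a1 u0 u1 (n + 1) * (u0 (n + 1) * u1 (n + 1)) then 1 else 0 := by
    simp [angleInd, hy0, hy1]
  rw [hc]
  -- `Q = W_n · u₀(n+1) u₁(n+1)` is a combination of `tⱼ = uⱼ(n) uⱼ(n+1)` with fixed signs.
  have hQ : jW a0 a1 u0 u1 n * (u0 (n + 1) * u1 (n + 1))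
      = (- a0 n * u0 (n + 1) ^ 2) * (u1 n * u1 (n + 1))
        - (- a1 n * u1 (n + 1) ^ 2) * (u0 n * u0 (n + 1)) := by
    unfold jW; ring
  have hA : 0 < - a0 n * u0 (n + 1) ^ 2 := mul_pos (neg_pos.2 ha0) (by positivity)
  have hB : 0 < - a1 n * u1 (n + 1) ^ 2 := mul_pos (neg_pos.2 ha1) (by positivity)
  have hQc : 0 < u0 n * u0 (n + 1) * (u1 n * u1 (n + 1)) →
      (0 < jW a0 a1 u0 u1 n * (u0 n * u1 n) ↔
        0 < jW a0 a1 u0 u1 n * (u0 (n + 1) * u1 (n + 1))) := by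
    intro ht
    have hxx : 0 < (u0 n * u1 n) * (u0 (n + 1) * u1 (n + 1)) := by linarith
    rcases pos_and_pos_or_neg_and_neg_of_mul_pos hxx with ⟨p, q⟩ | ⟨p, q⟩ <;>
      simp [mul_pos_iff, p, q, p.not_gt, q.not_gt]
  have hQc' : u0 n * u0 (n + 1) * (u1 n * u1 (n + 1)) < 0 →
      (0 < jW a0 a1 u0 u1 n * (u0 n * u1 n) ↔
        jW a0 a1 u0 u1 n * (u0 (n + 1) * u1 (n + 1)) < 0) := by
    intro ht
    have hxx : (u0 n * u1 n) * (u0 (n + 1) * u1 (n + 1)) < 0 := by linarith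
    rcases mul_neg_iff.1 hxx with ⟨p, q⟩ | ⟨p, q⟩ <;>
      simp [mul_pos_iff, mul_neg_iff, p, q, p.not_gt, q.not_gt]
  have hz0 : u0 n = 0 ↔ u0 n * u0 (n + 1) = 0 := by simp [hy0]
  have hz1 : u1 n = 0 ↔ u1 n * u1 (n + 1) = 0 := by simp [hy1]
  simp only [nodeInd, angleInd]
  simp only [hz0, hz1]
  rw [hQ] at hQc hQc' ⊢
  generalize - a0 n * u0 (n + 1) ^ 2 = A at *
  generalize - a1 n * u1 (n + 1) ^ 2 = B at *
  generalize u0 n * u0 (n + 1) = t0 at *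
  generalize u1 n * u1 (n + 1) = t1 at *
  rcases lt_trichotomy t0 0 with ht0 | ht0 | ht0 <;>
    rcases lt_trichotomy t1 0 with ht1 | ht1 | ht1
  · simp [ht0, ht1, hQc (mul_pos_of_neg_of_neg ht0 ht1), ht0.ne, ht1.ne]
  · have := mul_neg_of_pos_of_neg hB ht0
    simp [ht0, ht1, this, ht0.ne]
  · have h1 := mul_neg_of_pos_of_neg hB ht0
    have h2 := mul_pos hA ht1
    have h3 : B * t0 < A * t1 := by linarith
    simp [ht0, ht1.ne', ht1.not_gt, hQc' (mul_neg_of_neg_of_pos ht0 ht1), ht0.ne, h3, h3.not_gt]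
    ring
  · have := mul_neg_of_pos_of_neg hA ht1
    simp [ht0, ht1, this.not_gt]
  · simp [ht0, ht1]
  · have := mul_pos hA ht1
    simp [ht0, ht1.ne', ht1.not_gt, this]
    ring
  · have h1 := mul_pos hB ht0
    have h2 := mul_neg_of_pos_of_neg hA ht1
    have h3 : A * t1 < B * t0 := by linarith
    simp [ht1, ht0.ne', ht0.not_gt, hQc' (mul_neg_of_pos_of_neg ht0 ht1), ht1.ne, h3, h3.le]
  · have := mul_pos hB ht0
    simp [ht0.ne', ht0.not_gt, ht1, this.le]
  · simp [ht0.ne', ht1.ne', ht0.not_gt, ht1.not_gt, hQc (mul_pos ht0 ht1)]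

/-- The summed form of `jSgn_step`. -/
lemma cntCC_eq (N : ℕ) {a0 b0 a1 b1 u0 u1 : ℤ → ℝ} {z0 z1 : ℝ}
    (ha0 : ∀ n, a0 n < 0) (ha1 : ∀ n, a1 n < 0)
    (h0 : HalfSol a0 b0 z0 u0) (h1 : HalfSol a1 b1 z1 u1) :
    cntCC a0 a1 u0 u1 0 N = nodeSum N u1 - nodeSum N u0
      + (angleInd a0 a1 u0 u1 N - angleInd a0 a1 u0 u1 0) := by
  unfold cntCC nodeSum
  rw [sum_Ico_int, sum_Ico_int, sum_Ico_int]
  have tel := Finset.sum_range_sub (fun n : ℕ => angleInd a0 a1 u0 u1 (n : ℤ)) N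
  simp only [Nat.cast_zero] at tel
  rw [← tel, ← Finset.sum_sub_distrib, ← Finset.sum_add_distrib]
  refine Finset.sum_congr rfl fun n _ => ?_
  have hn : (0 : ℤ) ≤ n := by positivity
  rw [jSgn_step a0 a1 u0 u1 n (ha0 _) (ha1 _) (h0.1 n hn) (h1.1 n hn)]
  push_cast
  rfl

/-! ### Monotonicity of the node count -/

/-- For equal coefficients `a, b` the Wronskian increases by `(z₁ - z₀) u₀ u₁`. -/
lemma jW_succ {a b u0 u1 : ℤ → ℝ} {z0 z1 : ℝ}
    (h0 : HalfSol a b z0 u0) (h1 : HalfSol a b z1 u1) (n : ℤ) (hn : 0 ≤ n) :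
    jW a a u0 u1 (n + 1) = jW a a u0 u1 n + (z1 - z0) * (u0 (n + 1) * u1 (n + 1)) := by
  have e0 := h0.2 n hn
  have e1 := h1.2 n hn
  unfold jW
  linear_combination u0 (n + 1) * e1 - u1 (n + 1) * e0

/-- The Wronskian of two solutions of the same equation is constant, so it has no nodes. -/
lemma cntCC_same (N : ℕ) {a b u0 u1 : ℤ → ℝ} {z : ℝ}
    (h0 : HalfSol a b z u0) (h1 : HalfSol a b z u1) : cntCC a a u0 u1 0 N = 0 := by
  unfold cntCC
  refine Finset.sum_eq_zero fun n hn => ?_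
  have hn0 := (Finset.mem_Ico.1 hn).1
  have e := jW_succ h0 h1 n hn0
  rw [sub_self, zero_mul, add_zero] at e
  by_cases hy0 : u0 (n + 1) = 0
  · exact jSgn_zero _ _ _ _ _ (Or.inl hy0)
  by_cases hy1 : u1 (n + 1) = 0
  · exact jSgn_zero _ _ _ _ _ (Or.inr hy1)
  rw [jSgn_eq _ _ _ _ _ hy0 hy1, e, sub_self]

/-- Increasing the spectral parameter only creates Wronskian nodes of weight `+1`, one of them
at `0`. -/
lemma one_le_cntCC (N : ℕ) (hN : 2 ≤ N) {a b u0 u1 : ℤ → ℝ} {z0 z1 : ℝ} (hz : z0 < z1)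
    (h0 : HalfSol a b z0 u0) (h1 : HalfSol a b z1 u1) (hu0 : u0 0 = 0) (hu1 : u1 0 = 0) :
    1 ≤ cntCC a a u0 u1 0 N := by
  unfold cntCC
  have hnn : ∀ n ∈ Finset.Ico (0 : ℤ) N, 0 ≤ jSgn a a u0 u1 n := by
    intro n hn
    have e := jW_succ h0 h1 n (Finset.mem_Ico.1 hn).1
    by_cases hy0 : u0 (n + 1) = 0
    · exact (jSgn_zero _ _ _ _ _ (Or.inl hy0)).ge
    by_cases hy1 : u1 (n + 1) = 0
    · exact (jSgn_zero _ _ _ _ _ (Or.inr hy1)).ge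
    rw [jSgn_eq _ _ _ _ _ hy0 hy1]
    have : 0 < jW a a u0 u1 n * (u0 (n + 1) * u1 (n + 1)) →
        0 < jW a a u0 u1 (n + 1) * (u0 (n + 1) * u1 (n + 1)) := by
      intro h
      rw [e, add_mul]
      have : 0 ≤ (z1 - z0) * (u0 (n + 1) * u1 (n + 1)) * (u0 (n + 1) * u1 (n + 1)) := by
        rw [mul_assoc]
        exact mul_nonneg (sub_nonneg.2 hz.le) (mul_self_nonneg _)
      linarith
    split_ifs <;> simp_all
  have h00 : (0 : ℤ) ∈ Finset.Ico (0 : ℤ) N := by simp; omega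
  refine le_trans ?_ (Finset.single_le_sum hnn h00)
  have hy0 : u0 (0 + 1) ≠ 0 := fun h => h0.1 0 le_rfl ⟨hu0, h⟩
  have hy1 : u1 (0 + 1) ≠ 0 := fun h => h1.1 0 le_rfl ⟨hu1, h⟩
  have e := jW_succ h0 h1 0 le_rfl
  have hW : jW a a u0 u1 0 = 0 := by simp [jW, hu0, hu1]
  rw [jSgn_eq _ _ _ _ _ hy0 hy1, e, hW]
  have : 0 < (0 + (z1 - z0) * (u0 (0 + 1) * u1 (0 + 1))) * (u0 (0 + 1) * u1 (0 + 1)) := by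
    have hp : u0 (0 + 1) * u1 (0 + 1) ≠ 0 := mul_ne_zero hy0 hy1
    rw [zero_add, mul_assoc]
    exact mul_pos (sub_pos.2 hz) (mul_self_pos.2 hp)
  rw [if_pos this]
  simp

lemma angleInd_le_one (a0 a1 u0 u1 : ℤ → ℝ) (n : ℤ) : angleInd a0 a1 u0 u1 n ≤ 1 := by
  unfold angleInd; split_ifs <;> simp

lemma nodeSum_mono (N : ℕ) (hN : 2 ≤ N) {a b u0 u1 : ℤ → ℝ} {z0 z1 : ℝ} (ha : ∀ n, a n < 0)
    (hz : z0 < z1) (h0 : HalfSol a b z0 u0) (h1 : HalfSol a b z1 u1)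
    (hu0 : u0 0 = 0) (hu1 : u1 0 = 0) : nodeSum N u0 ≤ nodeSum N u1 := by
  have h := one_le_cntCC N hN hz h0 h1 hu0 hu1
  rw [cntCC_eq N ha ha h0 h1] at h
  have h2 := angleInd_le_one a a u0 u1 N
  have h3 : angleInd a a u0 u1 0 = 0 := by simp [angleInd, hu0]
  omega

/-- Passing an eigenvalue (`u₀(N) = 0`) strictly increases the number of nodes. -/
lemma nodeSum_strict (N : ℕ) (hN : 2 ≤ N) {a b u0 u1 : ℤ → ℝ} {z0 z1 : ℝ} (ha : ∀ n, a n < 0)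
    (hz : z0 < z1) (h0 : HalfSol a b z0 u0) (h1 : HalfSol a b z1 u1)
    (hu0 : u0 0 = 0) (hu1 : u1 0 = 0) (hu0N : u0 N = 0) : nodeSum N u0 < nodeSum N u1 := by
  have h := one_le_cntCC N hN hz h0 h1 hu0 hu1
  rw [cntCC_eq N ha ha h0 h1] at h
  have h2 : angleInd a a u0 u1 N = 0 := by simp [angleInd, hu0N]
  have h3 : angleInd a a u0 u1 0 = 0 := by simp [angleInd, hu0]
  omega

lemma nodeSum_le (N : ℕ) (u : ℤ → ℝ) : nodeSum N u ≤ N := by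
  unfold nodeSum
  calc _ ≤ ∑ _n ∈ Finset.Ico (0 : ℤ) N, (1 : ℤ) :=
        Finset.sum_le_sum fun n _ => by unfold nodeInd; split_ifs <;> simp
    _ = N := by simp

lemma one_le_nodeSum (N : ℕ) (hN : 2 ≤ N) (u : ℤ → ℝ) (hu : u 0 = 0) : 1 ≤ nodeSum N u := by
  unfold nodeSum
  have h00 : (0 : ℤ) ∈ Finset.Ico (0 : ℤ) N := by simp; omega
  refine le_trans ?_ (Finset.single_le_sum (f := nodeInd u)
    (fun n _ => by unfold nodeInd; split_ifs <;> simp) h00)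
  simp [nodeInd, hu]

/-! ### Solutions and eigenvectors -/

/-- The values at `0, 1, 2, …` of the solution with `u(0) = 0`, `u(1) = 1`. -/
def canonNat (a b : ℤ → ℝ) (z : ℝ) : ℕ → ℝ
  | 0 => 0
  | 1 => 1
  | n + 2 => ((z - b (n + 1)) * canonNat a b z (n + 1) - a n * canonNat a b z n) / a (n + 1)

/-- The solution with `u(0) = 0`, `u(1) = 1` on the half line (set to `0` on negative integers,
where its values play no role). -/
def canon (a b : ℤ → ℝ) (z : ℝ) (n : ℤ) : ℝ := canonNat a b z n.toNat

lemma canon_halfSol (a b : ℤ → ℝ) (z : ℝ) (ha : ∀ n, a n < 0) :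
    HalfSol a b z (canon a b z) := by
  have key : ∀ n : ℕ, a (n + 1) * canonNat a b z (n + 2) + a n * canonNat a b z n
      + b (n + 1) * canonNat a b z (n + 1) = z * canonNat a b z (n + 1) := by
    intro n
    have := (ha (n + 1)).ne
    rw [canonNat]
    field_simp
    ring
  have hnz : ∀ n : ℕ, ¬ (canonNat a b z n = 0 ∧ canonNat a b z (n + 1) = 0) := by
    intro n
    induction n with
    | zero => simp [canonNat]
    | succ k ih =>
      rintro ⟨h1, h2⟩
      have e := key k
      rw [h1, h2] at e
      have : a k * canonNat a b z k = 0 := by linarith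
      rcases mul_eq_zero.1 this with h | h
      · exact (ha k).ne h
      · exact ih ⟨h, h1⟩
  constructor
  · intro n hn
    lift n to ℕ using hn
    exact hnz n
  · intro n hn
    lift n to ℕ using hn
    exact key n

/-- A vector on `{1, …, m}` extended by zero to `ℤ`. -/
def extVec {m : ℕ} (v : Fin m → ℝ) (n : ℤ) : ℝ :=
  if h : 1 ≤ n ∧ n ≤ m then v ⟨(n - 1).toNat, by omega⟩ else 0

lemma extVec_succ {m : ℕ} (v : Fin m → ℝ) (i : Fin m) : extVec v ((i : ℕ) + 1 : ℤ) = v i := by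
  have : (1 : ℤ) ≤ (i : ℕ) + 1 ∧ ((i : ℕ) + 1 : ℤ) ≤ m := by omega
  unfold extVec
  rw [dif_pos this]
  congr 1
  ext
  simp

lemma mulVec_eq (m : ℕ) (a b : ℤ → ℝ) (v : Fin m → ℝ) (i : Fin m) :
    (jMatrix (m + 1) a b).mulVec v i = a ((i : ℕ) + 1) * extVec v ((i : ℕ) + 2)
      + a (i : ℕ) * extVec v (i : ℕ) + b ((i : ℕ) + 1) * extVec v ((i : ℕ) + 1) := by
  set w := extVec v with hw
  have e : (jMatrix (m + 1) a b).mulVec v i = ∑ j : Fin m,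
      ((if (i : ℕ) + 1 = (j : ℕ) then a ((i : ℕ) + 1) * w ((i : ℕ) + 2) else 0)
      + (if (j : ℕ) + 1 = (i : ℕ) then a (i : ℕ) * w (i : ℕ) else 0)
      + (if (i : ℕ) = (j : ℕ) then b ((i : ℕ) + 1) * w ((i : ℕ) + 1) else 0)) := by
    unfold Matrix.mulVec dotProduct
    refine Finset.sum_congr rfl fun j _ => ?_
    have hj : v j = w ((j : ℕ) + 1) := (extVec_succ v j).symm
    rw [hj]
    unfold jMatrix
    by_cases h1 : (i : ℕ) = (j : ℕ)
    · simp [h1]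
    by_cases h2 : (i : ℕ) + 1 = (j : ℕ)
    · have h3 : ¬ ((j : ℕ) + 1 = (i : ℕ)) := by omega
      simp only [h1, h2, h3, if_false, if_true, add_zero]
      rw [← h2]; push_cast; ring_nf
    by_cases h3 : (j : ℕ) + 1 = (i : ℕ)
    · simp only [h1, h2, h3, if_false, if_true, add_zero, zero_add]
      rw [← h3]; push_cast; rfl
    · simp [h1, h2, h3]
  rw [e, Finset.sum_add_distrib, Finset.sum_add_distrib]
  congr 1
  · congr 1
    · by_cases h : (i : ℕ) + 1 < m
      · rw [Finset.sum_eq_single (⟨i + 1, h⟩ : Fin m)]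
        · simp
        · intro j _ hj
          rw [if_neg]
          intro h'; exact hj (Fin.ext h'.symm)
        · simp
      · have : w ((i : ℕ) + 2) = 0 := by
          rw [hw]; unfold extVec; rw [dif_neg]; omega
        simp [this]
    · by_cases h : (i : ℕ) = 0
      · have : w ((i : ℕ) : ℤ) = 0 := by
          rw [hw]; unfold extVec; rw [dif_neg]; omega
        simp [this]
      · rw [Finset.sum_eq_single (⟨i - 1, by omega⟩ : Fin m)]
        · rw [if_pos]; simp; omega
        · intro j _ hj
          rw [if_neg]
          intro h'; apply hj; ext; simp; omega
        · simp
  · rw [Finset.sum_eq_single i]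
    · simp
    · intro j _ hj
      rw [if_neg]
      intro h'; exact hj (Fin.ext h'.symm)
    · simp

/-- An eigenvector, extended by zero, is proportional to the solution vanishing at `0`. -/
lemma extVec_prop (m : ℕ) {a b : ℤ → ℝ} {z : ℝ} {u : ℤ → ℝ} (ha : ∀ n, a n < 0)
    (hu : HalfSol a b z u) (hu0 : u 0 = 0) (v : Fin m → ℝ)
    (hv : (jMatrix (m + 1) a b).mulVec v = z • v) :
    ∀ n : ℕ, n ≤ m + 1 → extVec v n * u 1 = extVec v 1 * u n := by
  have hw0 : extVec v 0 = 0 := by unfold extVec; rw [dif_neg]; omega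
  have key : ∀ n : ℕ, n ≤ m → extVec v n * u 1 = extVec v 1 * u n ∧
      extVec v (n + 1) * u 1 = extVec v 1 * u (n + 1) := by
    intro n
    induction n with
    | zero => intro _; simp [hw0, hu0]
    | succ k ih =>
      intro hk
      obtain ⟨i1, i2⟩ := ih (by omega)
      push_cast
      refine ⟨i2, ?_⟩
      have e := congrFun hv ⟨k, by omega⟩
      rw [mulVec_eq, Pi.smul_apply, ← extVec_succ v ⟨k, by omega⟩, smul_eq_mul] at e
      simp only at e
      have e2 := hu.2 k (by positivity)
      have ha' := (ha (k + 1)).ne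
      have : (k : ℤ) + 1 + 1 = k + 2 := by ring
      rw [this] at e2 ⊢
      apply mul_left_cancel₀ ha'
      linear_combination u 1 * e - extVec v 1 * e2 - a k * i1 - (b (k + 1) - z) * i2
  intro n hn
  rcases Nat.lt_or_ge n (m + 1) with h | h
  · exact (key n (by omega)).1
  · have : n = m + 1 := by omega
    subst this
    have := (key m le_rfl).2
    exact_mod_cast this

lemma HalfSol.one_ne {a b : ℤ → ℝ} {z : ℝ} {u : ℤ → ℝ}
    (hu : HalfSol a b z u) (hu0 : u 0 = 0) : u 1 ≠ 0 := fun h => hu.1 0 le_rfl ⟨hu0, by simpa⟩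

lemma isEV_imp (m : ℕ) {a b : ℤ → ℝ} {z : ℝ} {u : ℤ → ℝ} (ha : ∀ n, a n < 0)
    (hu : HalfSol a b z u) (hu0 : u 0 = 0)
    (h : IsEV (jMatrix (m + 1) a b) z) : u ((m + 1 : ℕ) : ℤ) = 0 := by
  obtain ⟨v, hv0, hv⟩ := h
  have hp := extVec_prop m ha hu hu0 v hv
  have hw : extVec v ((m + 1 : ℕ) : ℤ) = 0 := by
    unfold extVec; rw [dif_neg]; push_cast; omega
  have e := hp (m + 1) le_rfl
  rw [hw, zero_mul] at e
  rcases mul_eq_zero.1 e.symm with e | e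
  · exfalso
    apply hv0
    funext i
    have := hp (i + 1) (by omega)
    push_cast at this
    rw [extVec_succ, e, zero_mul] at this
    exact (mul_eq_zero.1 this).resolve_right (hu.one_ne hu0)
  · exact e

/-- A Jacobi matrix has simple spectrum, hence as many eigenvalues as its size. -/
lemma ncard_isEV (m : ℕ) (a b : ℤ → ℝ) (ha : ∀ n, a n < 0) :
    {z | IsEV (jMatrix (m + 1) a b) z}.Finite ∧
      {z | IsEV (jMatrix (m + 1) a b) z}.ncard = m := by
  set J : Matrix (Fin m) (Fin m) ℝ := jMatrix (m + 1) a b with hJ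
  have hH : J.IsHermitian := by
    ext i j
    simp only [hJ, Matrix.conjTranspose_apply, jMatrix, star_trivial]
    by_cases h1 : (i : ℕ) = j
    · simp [h1]
    · by_cases h2 : (i : ℕ) + 1 = j
      · have h3 : ¬ ((j : ℕ) + 1 = i) := by omega
        simp [h1, h2, h3, Ne.symm h1]
      · simp [h1, h2, Ne.symm h1]
  have hev : ∀ i, J.mulVec (hH.eigenvectorBasis i).ofLp
      = hH.eigenvalues i • (hH.eigenvectorBasis i).ofLp := fun i => hH.mulVec_eigenvectorBasis i
  have hne : ∀ i, (hH.eigenvectorBasis i).ofLp ≠ 0 := by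
    intro i h
    have := hH.eigenvectorBasis.orthonormal.ne_zero i
    apply this
    ext k
    exact congrFun h k
  have hinj : Function.Injective hH.eigenvalues := by
    intro i j hij
    by_contra hc
    have hu := canon_halfSol a b (hH.eigenvalues i) ha
    have hu0 : canon a b (hH.eigenvalues i) 0 = 0 := rfl
    have p1 := extVec_prop m ha hu hu0 _ (hev i)
    have p2 := extVec_prop m ha hu hu0 _ (hij ▸ hev j)
    set v := (hH.eigenvectorBasis i).ofLp with hv
    set v' := (hH.eigenvectorBasis j).ofLp with hv'
    have hone := hu.one_ne hu0
    have hprop : ∀ k, extVec v' 1 * v k = extVec v 1 * v' k := by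
      intro k
      have q1 := p1 (k + 1) (by omega)
      have q2 := p2 (k + 1) (by omega)
      push_cast at q1 q2
      rw [extVec_succ] at q1 q2
      apply mul_right_cancel₀ hone
      linear_combination extVec v' 1 * q1 - extVec v 1 * q2
    have hv1 : extVec v' 1 ≠ 0 := by
      intro h
      apply hne j
      funext k
      have q2 := p2 (k + 1) (by omega)
      push_cast at q2
      rw [extVec_succ, h, zero_mul] at q2
      exact (mul_eq_zero.1 q2).resolve_right hone
    have hvec : extVec v' 1 • hH.eigenvectorBasis i = extVec v 1 • hH.eigenvectorBasis j := by
      ext k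
      exact hprop k
    have hin := congrArg (fun x => inner ℝ (hH.eigenvectorBasis i) x) hvec
    simp only [inner_smul_right, hH.eigenvectorBasis.inner_eq_one,
      hH.eigenvectorBasis.inner_eq_zero hc, mul_one, mul_zero] at hin
    exact hv1 hin
  have hset : {z | IsEV J z} = Set.range hH.eigenvalues := by
    ext z
    constructor
    · rintro ⟨v, hv0, hv⟩
      rw [← hH.spectrum_real_eq_range_eigenvalues, ← Matrix.spectrum_toLin']
      have : Module.End.HasEigenvector (Matrix.toLin' J) z v :=
        ⟨Module.End.mem_eigenspace_iff.2 (by simpa using hv), hv0⟩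
      exact (Module.End.hasEigenvalue_of_hasEigenvector this).mem_spectrum
    · rintro ⟨i, rfl⟩
      exact ⟨_, hne i, hev i⟩
  rw [hset]
  refine ⟨Set.finite_range _, ?_⟩
  rw [← Set.image_univ, Set.ncard_image_of_injective _ hinj, Set.ncard_univ]
  simp

/-! ### Oscillation theorems -/

/-- Sturm oscillation: besides the node at `0`, a solution vanishing at `0` has one node in
`{1, …, N - 1}` for each eigenvalue below `z`. The node count is injective on the eigenvalues; it
maps those `< z` into `[1, k)` and those `≥ z` into `[k, N)`, where `k` is its value at `z`. As
there are `N - 1` eigenvalues in total, both maps are onto. -/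
lemma nodeSum_eq (N : ℕ) (hN : 2 ≤ N) {a b : ℤ → ℝ} {z : ℝ} {u : ℤ → ℝ} (ha : ∀ n, a n < 0)
    (hu : HalfSol a b z u) (hu0 : u 0 = 0) :
    nodeSum N u = 1 + (evCount (jMatrix N a b) (Set.Iio z) : ℤ) := by
  classical
  obtain ⟨m, rfl⟩ : ∃ m, N = m + 1 := ⟨N - 1, by omega⟩
  set S := {μ | IsEV (jMatrix (m + 1) a b) μ} with hS
  obtain ⟨hfin, hcard⟩ := ncard_isEV m a b ha
  -- A choice of solutions vanishing at `0` for all spectral parameters, equal to `u` at `z`.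
  let U : ℝ → ℤ → ℝ := fun μ => if μ = z then u else canon a b μ
  have hU : ∀ μ, HalfSol a b μ (U μ) := by
    intro μ
    by_cases h : μ = z
    · subst h; simpa [U] using hu
    · simpa [U, h] using canon_halfSol a b μ ha
  have hU0 : ∀ μ, U μ 0 = 0 := by
    intro μ
    by_cases h : μ = z
    · simpa [U, h] using hu0
    · simp [U, h, canon, canonNat]
  have hUz : U z = u := by simp [U]
  let g : ℝ → ℤ := fun μ => nodeSum (m + 1) (U μ)
  have hstrict : ∀ μ ∈ S, ∀ ν, μ < ν → g μ < g ν := fun μ hμ ν hlt =>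
    nodeSum_strict _ hN ha hlt (hU μ) (hU ν) (hU0 μ) (hU0 ν) (isEV_imp m ha (hU μ) (hU0 μ) hμ)
  have hmono : ∀ μ ν, μ ≤ ν → g μ ≤ g ν := by
    intro μ ν h
    rcases h.eq_or_lt with h | h
    · rw [h]
    · exact nodeSum_mono _ hN ha h (hU μ) (hU ν) (hU0 μ) (hU0 ν)
  have hinj : Set.InjOn g S := by
    intro μ hμ ν hν h
    rcases lt_trichotomy μ ν with hl | hl | hl
    · exact absurd h (hstrict μ hμ ν hl).ne
    · exact hl
    · exact absurd h (hstrict ν hν μ hl).ne'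
  let F := hfin.toFinset
  have hF : ∀ μ, μ ∈ F ↔ μ ∈ S := fun μ => hfin.mem_toFinset
  have hFc : F.card = m := by rw [← hcard]; exact (Set.ncard_eq_toFinset_card _ hfin).symm
  have hlo : (F.filter (· < z)).card ≤ (Finset.Ico 1 (g z)).card := by
    refine Finset.card_le_card_of_injOn g ?_ ?_
    · intro μ hμ
      simp only [Finset.coe_filter, Set.mem_ofPred_eq, hF] at hμ
      simp only [Finset.coe_Ico, Set.mem_Ico]
      exact ⟨one_le_nodeSum _ hN _ (hU0 μ), hstrict μ hμ.1 z hμ.2⟩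
    · refine hinj.mono fun μ hμ => ?_
      simp only [Finset.coe_filter, Set.mem_ofPred_eq, hF] at hμ
      exact hμ.1
  have hhi : (F.filter (¬ · < z)).card ≤ (Finset.Ico (g z) ((m + 1 : ℕ) : ℤ)).card := by
    refine Finset.card_le_card_of_injOn g ?_ ?_
    · intro μ hμ
      simp only [Finset.coe_filter, Set.mem_ofPred_eq, hF, not_lt] at hμ
      simp only [Finset.coe_Ico, Set.mem_Ico]
      -- An eigenvalue never attains the maximal node count, as a larger parameter exceeds it.
      exact ⟨hmono z μ hμ.2, (hstrict μ hμ.1 (μ + 1) (by linarith)).trans_le (nodeSum_le _ _)⟩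
    · refine hinj.mono fun μ hμ => ?_
      simp only [Finset.coe_filter, Set.mem_ofPred_eq, hF] at hμ
      exact hμ.1
  have hsum := Finset.card_filter_add_card_filter_not (s := F) (· < z)
  have hev : evCount (jMatrix (m + 1) a b) (Set.Iio z) = (F.filter (· < z)).card := by
    unfold evCount
    rw [← Set.ncard_coe_finset]
    congr 1
    ext μ
    simp [hF, hS, and_comm]
  have g1 : 1 ≤ g z := one_le_nodeSum _ hN _ (hU0 z)
  have g2 : g z ≤ (m + 1 : ℕ) := nodeSum_le _ _
  have hgz : nodeSum (m + 1) u = g z := by simp [g, hUz]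
  rw [Int.card_Ico] at hlo hhi
  rw [hev, hgz]
  omega

/-- Node count of a solution vanishing at `N`, obtained by comparing it with a solution of the
same equation vanishing at `0`. -/
lemma nodeSum_eq_right (N : ℕ) (hN : 2 ≤ N) {a b : ℤ → ℝ} {z : ℝ} {u : ℤ → ℝ}
    (ha : ∀ n, a n < 0) (hu : HalfSol a b z u) (huN : u N = 0) :
    nodeSum N u = (evCount (jMatrix N a b) (Set.Iio z) : ℤ) + if u 0 = 0 then 1 else 0 := by
  have hc := canon_halfSol a b z ha
  have hc0 : canon a b z 0 = 0 := rfl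
  have h1 := nodeSum_eq N hN ha hc hc0
  have h2 := cntCC_same N hu hc
  rw [cntCC_eq N ha ha hu hc] at h2
  have h3 : angleInd a a u (canon a b z) N = 0 := by simp [angleInd, huN]
  have h4 : angleInd a a u (canon a b z) 0 = if u 0 = 0 then 0 else 1 := by
    simp [angleInd, hc0]
  rw [h3, h4, h1] at h2
  split_ifs at h2 ⊢ <;> omega

/-- Relative Oscillation Theorem (case 1). -/
theorem stmt_1 (N : ℕ) (hN : 2 ≤ N)
    (a0 b0 a1 b1 : ℤ → ℝ)
    (ha0 : ∀ n : ℤ, a0 n < 0) (ha1 : ∀ n : ℤ, a1 n < 0)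
    (lam0 lam1 : ℝ)
    (u0m u0p u1m u1p : ℤ → ℝ)
    (h0m : IsJSolution a0 b0 lam0 u0m) (h0m0 : u0m 0 = 0)
    (h0p : IsJSolution a0 b0 lam0 u0p) (h0pN : u0p (N : ℤ) = 0)
    (h1m : IsJSolution a1 b1 lam1 u1m) (h1m0 : u1m 0 = 0)
    (h1p : IsJSolution a1 b1 lam1 u1p) (h1pN : u1p (N : ℤ) = 0) :
    ((evCount (jMatrix N a1 b1) (Set.Iio lam1) : ℤ)
        - (evCount (jMatrix N a0 b0) (Set.Iio lam0) : ℤ)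
      = cntCC a0 a1 u0p u1m 0 (N : ℤ)) ∧
    ((evCount (jMatrix N a1 b1) (Set.Iio lam1) : ℤ)
        - (evCount (jMatrix N a0 b0) (Set.Iio lam0) : ℤ)
      = cntOO a0 a1 u0m u1p 0 (N : ℤ)) := by
  have s0m := HalfSol.of_solution ha0 h0m
  have s0p := HalfSol.of_solution ha0 h0p
  have s1m := HalfSol.of_solution ha1 h1m
  have s1p := HalfSol.of_solution ha1 h1p
  have n0m := nodeSum_eq N hN ha0 s0m h0m0
  have n0p := nodeSum_eq_right N hN ha0 s0p h0pN
  have n1m := nodeSum_eq N hN ha1 s1m h1m0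
  have n1p := nodeSum_eq_right N hN ha1 s1p h1pN
  constructor
  · rw [cntCC_eq N ha0 ha1 s0p s1m, n0p, n1m]
    have e1 : angleInd a0 a1 u0p u1m N = 0 := by simp [angleInd, h0pN]
    have e2 : angleInd a0 a1 u0p u1m 0 = if u0p 0 = 0 then 0 else 1 := by
      simp [angleInd, h1m0]
    rw [e1, e2]
    split_ifs <;> omega
  · unfold cntOO
    rw [cntCC_eq N ha0 ha1 s0m s1p, n0m, n1p]
    have e1 : angleInd a0 a1 u0m u1p N = if u0m N = 0 then 0 else 1 := by
      simp [angleInd, h1pN]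
    have e2 : angleInd a0 a1 u0m u1p 0 = 0 := by simp [angleInd, h0m0]
    have hu01 : u0m (0 + 1) ≠ 0 := fun h => s0m.1 0 le_rfl ⟨h0m0, h⟩
    have hu1N : u1p (N + 1) ≠ 0 := fun h => s1p.1 N (by positivity) ⟨h1pN, h⟩
    have w0 : jW a0 a1 u0m u1p 0 = 0 ↔ u1p 0 = 0 := by
      unfold jW
      rw [h0m0]
      simp only [zero_mul, zero_sub, neg_eq_zero, mul_eq_zero, (ha0 0).ne, hu01, or_false]
    have wN : jW a0 a1 u0m u1p N = 0 ↔ u0m N = 0 := by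
      unfold jW
      rw [h1pN]
      simp only [zero_mul, sub_zero, mul_eq_zero, (ha1 N).ne, hu1N, or_false]
    rw [e1, e2]
    simp only [w0, wN]
    split_ifs <;> omega
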